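/- Let k be a field of characteristic zero, A a unital commutative k-algebra, n ≥ 1, r ≥ 1, and φ : A^n → A a k-multilinear map that vanishes on r-fold shuffle products. Define kφ : A^{n+1} → A by (kφ)(a_1,…,a_{n+1}) = (1/(n+1)) Σ_{i=1}^{n+1} (−1)^{i−1} a_i · φ(a_1,…,â_i,…,a_{n+1}) (the hat denoting omission of the i-th argument). Then kφ vanishes on (r+1)-fold shuffle products. (Hence k maps the Hodge component C^{p,q}(A,A) to C^{p+1,q}(A,A).) -/

import Mathlib

/-- Insert the unit `1` at position `i` (0-indexed) into a tuple of length `n-1`. -/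
def insUnit {A : Type*} [One A] {n : ℕ} (i : Fin n) (a : Fin (n-1) → A) : Fin n → A :=
  fun k =>
    if h1 : (k : ℕ) < (i : ℕ) then a ⟨k, by have := i.isLt; omega⟩
    else if h2 : (k : ℕ) = (i : ℕ) then 1
    else a ⟨(k : ℕ) - 1, by have := k.isLt; omega⟩

/-- The differential `d' : C^n(A,A) → C^{n-1}(A,A)`, the alternating sum
`(d'φ)(a_1,…,a_{n-1}) = Σ_{j=1}^{n} (−1)^{n−j} φ(a_1,…,a_{j−1},1,a_j,…,a_{n−1})`
of insertions of the unit `1` into the arguments. -/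
def dUnit {A : Type*} [Ring A] {n : ℕ} (φ : (Fin n → A) → A) : (Fin (n-1) → A) → A :=
  fun a => ∑ i : Fin n, ((-1 : ℤ) ^ (n - 1 - (i : ℕ))) • φ (insUnit i a)

/-- The index of the block (of the composition `c`) containing the 0-indexed position `t`. -/
def blockOf (c : List ℕ) (t : ℕ) : ℕ :=
  (List.range c.length).countP (fun k => (c.take (k+1)).sum ≤ t)

/-- A permutation of `{0,…,n-1}` is a `(c_1,…,c_p)`-shuffle if it is strictly increasing
on each of the consecutive blocks of sizes `c_1,…,c_p`. -/
def IsShuffle {n : ℕ} (c : List ℕ) (σ : Equiv.Perm (Fin n)) : Prop :=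
  ∀ i j : Fin n, (i : ℕ) < (j : ℕ) → blockOf c i = blockOf c j → σ i < σ j

instance {n : ℕ} (c : List ℕ) :
    DecidablePred (fun σ : Equiv.Perm (Fin n) => IsShuffle c σ) := fun σ => by
  unfold IsShuffle; infer_instance

/-- A map `φ : A^n → A` vanishes on `p`-fold shuffle products if for every composition
`c` of `n` into `p` positive parts and all `a_1,…,a_n ∈ A` the signed sum of `φ` over all
`c`-shuffles vanishes: `Σ_σ sgn(σ) φ(a_{σ⁻¹(1)},…,a_{σ⁻¹(n)}) = 0`. -/
def VanishesOnShuffleProducts {A : Type*} [Ring A] (p n : ℕ) (φ : (Fin n → A) → A) : Prop :=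
  ∀ c : List ℕ, c.length = p → (∀ x ∈ c, 0 < x) → c.sum = n →
    ∀ a : Fin n → A,
      ∑ σ ∈ Finset.univ.filter (fun σ : Equiv.Perm (Fin n) => IsShuffle c σ),
        ((Equiv.Perm.sign σ : ℤˣ) : ℤ) • φ (fun t => a (σ.symm t)) = 0

/-- The null-homotopy `k : C^n(A,A) → C^{n+1}(A,A)`:
`(kφ)(a_1,…,a_{n+1}) = (1/(n+1)) Σ_{i=1}^{n+1} (−1)^{i−1} a_i · φ(a_1,…,â_i,…,a_{n+1})`. -/
def kMap (k : Type*) {A : Type*} [Field k] [CommRing A] [Algebra k A]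
    {n : ℕ} (φ : (Fin n → A) → A) : (Fin (n+1) → A) → A :=
  fun a => (((n : k) + 1)⁻¹) •
    ∑ i : Fin (n+1), ((-1 : ℤ) ^ (i : ℕ)) • (a i * φ (fun t => a (i.succAbove t)))

/-- Integer-valued functions on words in the alphabet `X`, carrying the shuffle product. -/
def ShuffleAlg (X : Type*) : Type _ := List X → ℤ

namespace ShuffleAlg

variable {X : Type*}

instance : AddCommGroup (ShuffleAlg X) := inferInstanceAs (AddCommGroup (List X → ℤ))

/-- The left derivative `∂_a f (w) = f (a w)`. -/
def der (a : X) (f : ShuffleAlg X) : ShuffleAlg X := fun w => f (a :: w)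

/-- The coefficient at `w` of the shuffle product, by recursion on `w`. -/
def shuffleCoeff : List X → ShuffleAlg X → ShuffleAlg X → ℤ
  | [], f, g => f [] * g []
  | a :: w, f, g => shuffleCoeff w (der a f) g + shuffleCoeff w f (der a g)

instance : Mul (ShuffleAlg X) := ⟨fun f g w => shuffleCoeff w f g⟩

instance : One (ShuffleAlg X) := ⟨fun w => if w.isEmpty then 1 else 0⟩

theorem add_apply (f g : ShuffleAlg X) (w : List X) : (f + g) w = f w + g w := rfl

theorem sub_apply (f g : ShuffleAlg X) (w : List X) : (f - g) w = f w - g w := rfl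

theorem zero_apply (w : List X) : (0 : ShuffleAlg X) w = 0 := rfl

theorem one_nil : (1 : ShuffleAlg X) [] = 1 := rfl

theorem mul_nil (f g : ShuffleAlg X) : (f * g) [] = f [] * g [] := rfl

theorem mul_cons (f g : ShuffleAlg X) (a : X) (w : List X) :
    (f * g) (a :: w) = (der a f * g) w + (f * der a g) w := rfl

theorem der_apply (a : X) (f : ShuffleAlg X) (w : List X) : der a f w = f (a :: w) := rfl

theorem der_add (a : X) (f g : ShuffleAlg X) : der a (f + g) = der a f + der a g := rfl

theorem der_sub (a : X) (f g : ShuffleAlg X) : der a (f - g) = der a f - der a g := rfl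

theorem der_zero (a : X) : der a (0 : ShuffleAlg X) = 0 := rfl

theorem der_one (a : X) : der a (1 : ShuffleAlg X) = 0 := rfl

theorem der_mul (a : X) (f g : ShuffleAlg X) : der a (f * g) = der a f * g + f * der a g := rfl

theorem mul_comm_apply (w : List X) : ∀ f g : ShuffleAlg X, (f * g) w = (g * f) w := by
  induction w with
  | nil => intro f g; simp [mul_nil, mul_comm]
  | cons a w ih => intro f g; rw [mul_cons, mul_cons, ih, ih f, add_comm]

theorem add_mul_apply (w : List X) :
    ∀ f g h : ShuffleAlg X, ((f + g) * h) w = (f * h) w + (g * h) w := by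
  induction w with
  | nil => intro f g h; simp only [mul_nil, add_apply]; ring
  | cons a w ih => intro f g h; simp only [mul_cons, der_add, ih]; ring

theorem zero_mul_apply (w : List X) : ∀ f : ShuffleAlg X, ((0 : ShuffleAlg X) * f) w = 0 := by
  induction w with
  | nil => intro f; simp [mul_nil, zero_apply]
  | cons a w ih => intro f; simp [mul_cons, der_zero, ih]

theorem one_mul_apply (w : List X) : ∀ f : ShuffleAlg X, ((1 : ShuffleAlg X) * f) w = f w := by
  induction w with
  | nil => intro f; simp [mul_nil, one_nil]
  | cons a w ih => intro f; simp [mul_cons, der_one, ih, zero_mul_apply, der_apply]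

theorem mul_assoc_apply (w : List X) :
    ∀ f g h : ShuffleAlg X, (f * g * h) w = (f * (g * h)) w := by
  have mul_add_apply (w : List X) (f g h : ShuffleAlg X) :
      (f * (g + h)) w = (f * g) w + (f * h) w := by
    rw [mul_comm_apply, add_mul_apply, mul_comm_apply, mul_comm_apply w h]
  induction w with
  | nil => intro f g h; simp [mul_nil, mul_assoc]
  | cons a w ih =>
    intro f g h
    simp only [mul_cons, der_mul, add_mul_apply, mul_add_apply, ih]
    ring

instance : CommRing (ShuffleAlg X) where
  __ := (inferInstance : AddCommGroup (ShuffleAlg X))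
  mul := (· * ·)
  one := 1
  left_distrib f g h := funext fun w => by
    rw [mul_comm_apply, add_mul_apply, add_apply, mul_comm_apply, mul_comm_apply w h]
  right_distrib f g h := funext fun w => add_mul_apply w f g h
  zero_mul f := funext fun w => zero_mul_apply w f
  mul_zero f := funext fun w => by rw [mul_comm_apply]; exact zero_mul_apply w f
  mul_assoc f g h := funext fun w => mul_assoc_apply w f g h
  one_mul f := funext fun w => one_mul_apply w f
  mul_one f := funext fun w => by rw [mul_comm_apply]; exact one_mul_apply w f
  mul_comm f g := funext fun w => mul_comm_apply w f g

/-- The sum of the values of `f` over all insertions of the letter `x` into a word. -/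
def deleteCoeff (x : X) : List X → ShuffleAlg X → ℤ
  | [], f => f [x]
  | a :: w, f => f (x :: a :: w) + deleteCoeff x w (der a f)

theorem deleteCoeff_add (x : X) (w : List X) :
    ∀ f g, deleteCoeff x w (f + g) = deleteCoeff x w f + deleteCoeff x w g := by
  induction w with
  | nil => intro f g; rfl
  | cons a w ih => intro f g; simp only [deleteCoeff, der_add, ih, add_apply]; ring

/-- The operator deleting one occurrence of the letter `x` in all possible ways. -/
def delete (x : X) : ShuffleAlg X →+ ShuffleAlg X :=
  AddMonoidHom.mk' (fun f w => deleteCoeff x w f) fun f g =>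
    funext fun w => deleteCoeff_add x w f g

theorem delete_nil (x : X) (f : ShuffleAlg X) : delete x f [] = der x f [] := rfl

theorem der_delete (a x : X) (f : ShuffleAlg X) :
    der a (delete x f) = der a (der x f) + delete x (der a f) := rfl

theorem delete_ofFn (x : X) : ∀ {n : ℕ} (v : Fin n → X) (f : ShuffleAlg X),
    delete x f (List.ofFn v) = ∑ i : Fin (n + 1), f (List.ofFn (i.insertNth x v))
  | 0, v, f => by simp [delete_nil, der_apply]
  | n + 1, v, f => by
    rw [List.ofFn_succ]
    change der (v 0) (delete x f) _ = _
    rw [der_delete, add_apply, Fin.sum_univ_succ, delete_ofFn]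
    congr 1
    · simp [der_apply]
    · refine Finset.sum_congr rfl fun i _ => ?_
      have h : (i.succ.insertNth x v : Fin (n + 2) → X) =
          Fin.cons (v 0) (i.insertNth x (Fin.tail v) : Fin (n + 1) → X) := by
        rw [← Fin.insertNth_succ_cons, Fin.cons_self_tail]
      rw [der_apply, h, List.ofFn_cons]
      rfl

/-- The third-order defect of `D` as a differential operator on the shuffle algebra. -/
def defect (D : ShuffleAlg X → ShuffleAlg X) (u v s : ShuffleAlg X) : ShuffleAlg X :=
  D (u * v * s) - D (u * v) * s - D (u * s) * v - D (v * s) * u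
    + D u * (v * s) + D v * (u * s) + D s * (u * v)

theorem der_defect (a x : X) (u v s : ShuffleAlg X) :
    der a (defect (delete x) u v s) =
      defect (delete x) (der a u) v s + defect (delete x) u (der a v) s
        + defect (delete x) u v (der a s) := by
  simp only [defect, der_add, der_sub, der_mul, der_delete, map_add]
  ring_nf
  simp only [map_add]
  ring

theorem defect_delete_apply (x : X) (w : List X) :
    ∀ u v s : ShuffleAlg X, defect (delete x) u v s w = 0 := by
  induction w with
  | nil =>
    intro u v s
    simp only [defect, add_apply, sub_apply, mul_nil, delete_nil, der_mul]
    ring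
  | cons a w ih =>
    intro u v s
    change der a (defect (delete x) u v s) w = 0
    rw [der_defect, add_apply, add_apply, ih, ih, ih]
    simp

/-- Deleting a letter is a second-order differential operator for the shuffle product. -/
theorem delete_mul_mul (x : X) (u v s : ShuffleAlg X) :
    delete x (u * (v * s)) = delete x (u * v) * s + delete x (u * s) * v + delete x (v * s) * u
      - delete x u * (v * s) - delete x v * (u * s) - delete x s * (u * v) := by
  have h : defect (delete x) u v s = 0 := funext fun w => defect_delete_apply x w u v s
  rw [defect, mul_assoc u v s] at h
  linear_combination h

theorem ext_der {f g : ShuffleAlg X} (h₀ : f [] = g []) (h : ∀ a, der a f = der a g) : f = g := by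
  funext w
  match w with
  | [] => exact h₀
  | a :: w => exact congrFun (h a) w

/-- The coefficient at a word of the function obtained by prepending the letter `a`. -/
def prependCoeff [DecidableEq X] (a : X) (f : ShuffleAlg X) : List X → ℤ
  | [] => 0
  | b :: w => if b = a then f w else 0

theorem prependCoeff_add [DecidableEq X] (a : X) (f g : ShuffleAlg X) (w : List X) :
    prependCoeff a (f + g) w = prependCoeff a f w + prependCoeff a g w := by
  match w with
  | [] => rfl
  | b :: w => by_cases h : b = a <;> simp [prependCoeff, h, add_apply]

/-- Prepending the letter `a` to every word. -/
def prepend [DecidableEq X] (a : X) : ShuffleAlg X →+ ShuffleAlg X :=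
  AddMonoidHom.mk' (fun f => prependCoeff a f) fun f g => funext (prependCoeff_add a f g)

/-- The indicator function of a word. -/
def word [DecidableEq X] (u : List X) : ShuffleAlg X := fun w => if w = u then 1 else 0

section Words

variable [DecidableEq X]

theorem word_apply (u w : List X) : word u w = if w = u then 1 else 0 := rfl

theorem prepend_nil (a : X) (f : ShuffleAlg X) : prepend a f [] = 0 := rfl

theorem der_prepend (a b : X) (f : ShuffleAlg X) :
    der b (prepend a f) = if b = a then f else 0 := by
  funext w
  change prependCoeff a f (b :: w) = _
  by_cases h : b = a <;> simp [prependCoeff, h, zero_apply]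

theorem word_nil : (word [] : ShuffleAlg X) = 1 :=
  ext_der rfl fun a => by
    rw [der_one]; funext w; simp [der_apply, word_apply, zero_apply]

theorem prepend_word (a : X) (u : List X) : prepend a (word u) = word (a :: u) :=
  ext_der (by simp [prepend_nil, word_apply]) fun b => by
    rw [der_prepend]
    funext w
    by_cases h : b = a <;> simp [h, der_apply, word_apply, zero_apply]

theorem prepend_mul_prepend (a b : X) (f g : ShuffleAlg X) :
    prepend a f * prepend b g = prepend a (f * prepend b g) + prepend b (prepend a f * g) :=
  ext_der (by simp [mul_nil, prepend_nil, add_apply]) fun c => by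
    simp only [der_mul, der_add, der_prepend]
    split_ifs <;> simp

theorem delete_prepend (x a : X) (f : ShuffleAlg X) :
    delete x (prepend a f) = (if x = a then f else 0) + prepend a (delete x f) :=
  ext_der (by simp [delete_nil, der_prepend, add_apply, prepend_nil]) fun c => by
    simp only [der_delete, der_add, der_prepend]
    split_ifs <;> simp

variable (X) in
/-- Finite combinations of words. -/
def wordSpan : Submodule ℤ (ShuffleAlg X) := Submodule.span ℤ (Set.range word)

variable (X) in
/-- Finite combinations of nonempty words. -/
def augSpan : Submodule ℤ (ShuffleAlg X) := Submodule.span ℤ (Set.image word {u | u ≠ []})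

theorem word_mem (u : List X) : word u ∈ wordSpan X := Submodule.subset_span ⟨u, rfl⟩

theorem augSpan_le : augSpan X ≤ wordSpan X := Submodule.span_mono (Set.image_subset_range _ _)

theorem map_mem_wordSpan (D : ShuffleAlg X →+ ShuffleAlg X)
    (hD : ∀ u, D (word u) ∈ wordSpan X) {f : ShuffleAlg X} (hf : f ∈ wordSpan X) :
    D f ∈ wordSpan X := by
  have : wordSpan X ≤ (wordSpan X).comap D.toIntLinearMap :=
    Submodule.span_le.2 (by rintro _ ⟨u, rfl⟩; exact hD u)
  exact this hf

theorem prepend_mem (a : X) {f : ShuffleAlg X} (hf : f ∈ wordSpan X) :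
    prepend a f ∈ wordSpan X :=
  map_mem_wordSpan (prepend a) (fun u => by rw [prepend_word]; exact word_mem _) hf

theorem delete_mem (x : X) {f : ShuffleAlg X} (hf : f ∈ wordSpan X) :
    delete x f ∈ wordSpan X := by
  refine map_mem_wordSpan (delete x) (fun u => ?_) hf
  induction u with
  | nil =>
    have : delete x (word [] : ShuffleAlg X) = 0 :=
      ext_der (by simp [word_nil, delete_nil, der_one]) fun a => by
        simp [word_nil, der_delete, der_one, der_zero]
    rw [this]
    exact zero_mem _
  | cons a u ih =>
    rw [← prepend_word, delete_prepend]
    refine add_mem ?_ (prepend_mem a ih)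
    split_ifs
    exacts [word_mem u, zero_mem _]

theorem word_mul_word_mem (u v : List X) : word u * word v ∈ wordSpan X := by
  induction u generalizing v with
  | nil => rw [word_nil, one_mul]; exact word_mem v
  | cons a u ihu =>
    induction v with
    | nil => rw [word_nil, mul_one]; exact word_mem _
    | cons b v ihv =>
      rw [← prepend_word a, ← prepend_word b, prepend_mul_prepend, prepend_word, prepend_word]
      exact add_mem (prepend_mem a (ihu _)) (prepend_mem b ihv)

theorem wordSpan_mul_self : wordSpan X * wordSpan X = wordSpan X := by
  refine le_antisymm ?_ fun f hf => ?_
  · rw [wordSpan, Submodule.span_mul_span, Submodule.span_le]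
    rintro _ ⟨_, ⟨u, rfl⟩, _, ⟨v, rfl⟩, rfl⟩
    exact word_mul_word_mem u v
  · rw [← mul_one f, ← word_nil]
    exact Submodule.mul_mem_mul hf (word_mem [])

theorem augSpan_nil {f : ShuffleAlg X} (hf : f ∈ augSpan X) : f [] = 0 := by
  induction hf using Submodule.span_induction with
  | mem f h => obtain ⟨u, hu, rfl⟩ := h; simpa [word_apply, eq_comm] using hu
  | zero => rfl
  | add f g _ _ hf hg => rw [add_apply, hf, hg, add_zero]
  | smul c f _ hf => exact (congrArg (c • ·) hf).trans (smul_zero c)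

theorem mem_augSpan {f : ShuffleAlg X} (hf : f ∈ wordSpan X) (h₀ : f [] = 0) :
    f ∈ augSpan X := by
  have key : f - f [] • 1 ∈ augSpan X := by
    clear h₀
    induction hf using Submodule.span_induction with
    | mem f h =>
      obtain ⟨u, rfl⟩ := h
      by_cases hu : u = []
      · subst hu; simp [word_nil, one_nil]
      · rw [word_apply, if_neg (Ne.symm hu), zero_smul, sub_zero]
        exact Submodule.subset_span ⟨u, hu, rfl⟩
    | zero => simp [zero_apply]
    | add f g _ _ hf hg =>
      have := add_mem hf hg
      rwa [sub_add_sub_comm, ← add_smul] at this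
    | smul c f _ hf =>
      have := Submodule.smul_mem _ c hf
      rwa [smul_sub, smul_smul] at this
  rwa [h₀, zero_smul, sub_zero] at key

theorem wordSpan_mul_augSpan : wordSpan X * augSpan X = augSpan X := by
  refine le_antisymm (Submodule.mul_le.2 fun f hf g hg => ?_) fun f hf => ?_
  · refine mem_augSpan ?_ (by rw [mul_nil, augSpan_nil hg, mul_zero])
    rw [← wordSpan_mul_self]
    exact Submodule.mul_mem_mul hf (augSpan_le hg)
  · rw [← one_mul f, ← word_nil]
    exact Submodule.mul_mem_mul (word_mem []) hf

variable (X) in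
/-- The filtration of the finite combinations of words by powers of the augmentation ideal. -/
def shFil (r : ℕ) : Submodule ℤ (ShuffleAlg X) := wordSpan X * augSpan X ^ r

theorem shFil_zero : shFil X 0 = wordSpan X := by rw [shFil, pow_zero, mul_one]

theorem shFil_succ (r : ℕ) : shFil X (r + 1) = augSpan X ^ (r + 1) := by
  rw [shFil, pow_succ', ← mul_assoc, wordSpan_mul_augSpan]

theorem shFil_one : shFil X 1 = augSpan X := by rw [shFil_succ, zero_add, pow_one]

theorem mul_mem_shFil {a b : ℕ} {f g : ShuffleAlg X} (hf : f ∈ shFil X a) (hg : g ∈ shFil X b) :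
    f * g ∈ shFil X (a + b) := by
  have : shFil X a * shFil X b = shFil X (a + b) := by
    rw [shFil, shFil, shFil, mul_mul_mul_comm, wordSpan_mul_self, ← pow_add]
  rw [← this]
  exact Submodule.mul_mem_mul hf hg

theorem shFil_succ_induction {r : ℕ} {D : ShuffleAlg X →+ ShuffleAlg X}
    {N : Submodule ℤ (ShuffleAlg X)}
    (h : ∀ u ∈ augSpan X, ∀ g ∈ shFil X r, D (u * g) ∈ N) :
    ∀ f ∈ shFil X (r + 1), D f ∈ N := by
  have : augSpan X * shFil X r ≤ N.comap D.toIntLinearMap := Submodule.mul_le.2 h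
  intro f hf
  rw [shFil, pow_succ', mul_left_comm] at hf
  exact this hf

theorem delete_mem_shFil (x : X) (r : ℕ) :
    ∀ f ∈ shFil X (r + 1), delete x f ∈ shFil X r := by
  induction r using Nat.strong_induction_on with
  | _ r ih =>
  match r with
  | 0 =>
    intro f hf
    rw [shFil_one] at hf
    rw [shFil_zero]
    exact delete_mem x (augSpan_le hf)
  | 1 =>
    refine shFil_succ_induction fun u hu v hv => ?_
    rw [shFil_one] at hv ⊢
    refine mem_augSpan (delete_mem x ?_) ?_
    · rw [← wordSpan_mul_self]
      exact Submodule.mul_mem_mul (augSpan_le hu) (augSpan_le hv)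
    · simp [delete_nil, der_mul, add_apply, mul_nil, augSpan_nil hu, augSpan_nil hv]
  | r + 2 =>
    have step {a b : ℕ} {f g : ShuffleAlg X} (hf : f ∈ shFil X a) (hg : g ∈ shFil X b)
        (hab : a + b = r + 2) : f * g ∈ shFil X (r + 2) := hab ▸ mul_mem_shFil hf hg
    refine shFil_succ_induction fun u hu => ?_
    refine shFil_succ_induction (D := (delete x).comp (AddMonoidHom.mulLeft u)) fun v hv s hs => ?_
    rw [← shFil_one] at hu hv
    change delete x (u * (v * s)) ∈ _
    rw [delete_mul_mul]
    have huv := mul_mem_shFil hu hv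
    have hus := mul_mem_shFil hu hs
    have hvs := mul_mem_shFil hv hs
    rw [Nat.add_comm] at hus hvs
    refine sub_mem (sub_mem (sub_mem (add_mem (add_mem ?_ ?_) ?_) ?_) ?_) ?_
    · exact step (ih 1 (by omega) _ huv) hs (by omega)
    · exact step (ih (r + 1) (by omega) _ hus) hv (by omega)
    · exact step (ih (r + 1) (by omega) _ hvs) hu (by omega)
    · exact step (ih 0 (by omega) _ hu) hvs (by omega)
    · exact step (ih 0 (by omega) _ hv) hus (by omega)
    · exact step (ih r (by omega) _ hs) huv (by omega)

end Words

end ShuffleAlg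

namespace ShuffleAlg

variable {X : Type*}

/-- A shuffle product of functions supported on words in disjoint alphabets. -/
theorem mul_apply_of_disjoint (p : X → Bool) (w : List X) : ∀ f g : ShuffleAlg X,
    (∀ v, f v ≠ 0 → ∀ a ∈ v, p a = true) → (∀ v, g v ≠ 0 → ∀ a ∈ v, p a = false) →
    (f * g) w = f (w.filter p) * g (w.filter fun a => !p a) := by
  induction w with
  | nil => intro f g _ _; rfl
  | cons a w ih =>
    intro f g hf hg
    have hf' : ∀ v, der a f v ≠ 0 → ∀ b ∈ v, p b = true := fun v hv b hb =>
      hf _ hv b (List.mem_cons_of_mem a hb)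
    have hg' : ∀ v, der a g v ≠ 0 → ∀ b ∈ v, p b = false := fun v hv b hb =>
      hg _ hv b (List.mem_cons_of_mem a hb)
    rw [mul_cons, ih _ _ hf' hg, ih _ _ hf hg', der_apply, der_apply]
    cases hp : p a with
    | true =>
      have : g (a :: w.filter fun a => !p a) = 0 := by
        by_contra h
        simpa [hp] using hg _ h a
      simp [hp, this]
    | false =>
      have : f (a :: w.filter p) = 0 := by
        by_contra h
        simpa [hp] using hf _ h a
      simp [hp, this]

theorem mul_ne_zero_perm (w : List X) : ∀ f g : ShuffleAlg X, ∀ U V : List X,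
    (∀ v, f v ≠ 0 → v.Perm U) → (∀ v, g v ≠ 0 → v.Perm V) → (f * g) w ≠ 0 → w.Perm (U ++ V) := by
  classical
  induction w with
  | nil =>
    intro f g U V hf hg h
    rw [mul_nil] at h
    have h1 := hf _ (left_ne_zero_of_mul h)
    have h2 := hg _ (right_ne_zero_of_mul h)
    exact h1.append h2
  | cons a w ih =>
    intro f g U V hf hg h
    rw [mul_cons] at h
    have hcases : (der a f * g) w ≠ 0 ∨ (f * der a g) w ≠ 0 := by
      by_contra! hc
      exact h (by rw [hc.1, hc.2, add_zero])
    rcases hcases with h | h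
    · by_cases ha : a ∈ U
      · have := ih (der a f) g (U.erase a) V
          (fun v hv => (List.cons_perm_iff_perm_erase.1 (hf _ hv)).2) hg h
        exact (this.cons a).trans ((List.perm_cons_erase ha).symm.append_right V)
      · have h0 : der a f = 0 := funext fun v => by
          by_contra hv
          exact ha ((hf _ hv).subset List.mem_cons_self)
        rw [h0, zero_mul] at h
        exact absurd rfl h
    · by_cases ha : a ∈ V
      · have := ih f (der a g) U (V.erase a) hf
          (fun v hv => (List.cons_perm_iff_perm_erase.1 (hg _ hv)).2) h
        exact (this.cons a).trans (List.perm_middle.symm.trans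
          ((List.perm_cons_erase ha).symm.append_left U))
      · have h0 : der a g = 0 := funext fun v => by
          by_contra hv
          exact ha ((hg _ hv).subset List.mem_cons_self)
        rw [h0, mul_zero] at h
        exact absurd rfl h

variable [DecidableEq X]

/-- Words occurring in a shuffle product rearrange the concatenation of the factors. -/
theorem perm_flatten_of_prod_ne_zero (L : List (List X)) {w : List X}
    (h : (L.map word).prod w ≠ 0) : w.Perm L.flatten := by
  induction L generalizing w with
  | nil =>
    rw [List.map_nil, List.prod_nil, ← word_nil, word_apply] at h
    simp_all
  | cons u L ih =>
    rw [List.map_cons, List.prod_cons] at h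
    refine mul_ne_zero_perm w _ _ u L.flatten (fun v hv => ?_) (fun v hv => ih hv) h
    rw [word_apply] at hv
    simp_all

/-- For factors with disjoint letters, a word occurs in the shuffle product exactly once if it
restricts to each factor, and not at all otherwise. -/
theorem prod_word_apply (L : List (List X)) (hL : L.flatten.Nodup) (w : List X)
    (hw : w ⊆ L.flatten) :
    (L.map word).prod w = if ∀ u ∈ L, w.filter (· ∈ u) = u then 1 else 0 := by
  induction L generalizing w with
  | nil =>
    have : w = [] := List.subset_nil.1 hw
    subst this
    simp [one_nil]
  | cons u L ih =>
    rw [List.flatten_cons] at hL hw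
    have hd := List.disjoint_of_nodup_append hL
    have hLw : ∀ z ∈ L, (w.filter fun a => !decide (a ∈ u)).filter (· ∈ z) =
        w.filter (· ∈ z) := fun z hz => by
      rw [List.filter_filter]
      refine List.filter_congr fun a _ => ?_
      by_cases haz : a ∈ z
      · have : a ∉ u := fun hau => hd hau (List.mem_flatten.2 ⟨z, hz, haz⟩)
        simp [haz, this]
      · simp [haz]
    rw [List.map_cons, List.prod_cons, mul_apply_of_disjoint (fun a => decide (a ∈ u)),
      ih hL.of_append_right, word_apply, ite_zero_mul_ite_zero, one_mul]
    · refine if_congr ?_ rfl rfl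
      rw [List.forall_mem_cons]
      refine and_congr_right fun _ => forall₂_congr fun z hz => ?_
      rw [hLw z hz]
    · intro a ha
      rw [List.mem_filter] at ha
      exact (List.mem_append.1 (hw ha.1)).resolve_left (by simpa using ha.2)
    · intro v hv a ha
      rw [word_apply] at hv
      have : v = u := by by_contra h; simp [h] at hv
      simpa [← this] using ha
    · intro v hv a ha
      have := (perm_flatten_of_prod_ne_zero L hv).subset ha
      simpa using fun hau => hd hau this

end ShuffleAlg

theorem blockOf_cons (m : ℕ) (c : List ℕ) (t : ℕ) :
    blockOf (m :: c) t = if t < m then 0 else blockOf c (t - m) + 1 := by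
  rw [blockOf, List.length_cons, List.range_succ_eq_map, List.countP_cons, List.countP_map]
  by_cases h : t < m
  · have h0 : List.countP ((fun k => decide ((List.take (k + 1) (m :: c)).sum ≤ t)) ∘ Nat.succ)
        (List.range c.length) = 0 := by
      rw [List.countP_eq_zero]
      intro k _
      simp only [Function.comp_apply, List.take_succ_cons, List.sum_cons, Nat.succ_eq_add_one]
      intro hk
      have := of_decide_eq_true hk
      omega
    rw [h0, if_pos h, if_neg (by simpa using h)]
  · rw [if_neg h, if_pos (by simpa using h), blockOf]
    refine congrArg (· + 1) (List.countP_congr fun k _ => ?_)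
    simp only [Function.comp_apply, List.take_succ_cons, List.sum_cons, Nat.succ_eq_add_one]
    constructor <;> intro hk <;> have := of_decide_eq_true hk <;> apply decide_eq_true <;> omega

/-- A relation holds along every block of a concatenation iff it holds between any two entries
of the concatenation with the same block index. -/
theorem forall_pairwise_iff_blockOf {X : Type*} (R : X → X → Prop) (L : List (List X)) :
    (∀ u ∈ L, u.Pairwise R) ↔
      ∀ i j (hj : j < L.flatten.length) (hij : i < j),
        blockOf (L.map List.length) i = blockOf (L.map List.length) j →
          R (L.flatten[i]'(hij.trans hj)) L.flatten[j] := by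
  induction L with
  | nil => simp
  | cons u L ih =>
    rw [List.forall_mem_cons, ih, List.pairwise_iff_getElem]
    simp only [List.map_cons, blockOf_cons, List.flatten_cons, List.length_append]
    constructor
    · rintro ⟨h1, h2⟩ i j hj hij hb
      by_cases hju : j < u.length
      · rw [List.getElem_append_left hju, List.getElem_append_left (hij.trans hju)]
        exact h1 _ _ _ _ hij
      · by_cases hiu : i < u.length
        · simp [hiu, hju] at hb
        · rw [List.getElem_append_right (by omega), List.getElem_append_right (by omega)]
          refine h2 _ _ _ (by omega) ?_
          simpa [hiu, hju] using hb
    · intro h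
      refine ⟨fun i j hi hj hij => ?_, fun i j hj hij hb => ?_⟩
      · have := h i j (by omega) hij (by simp [hi, hj])
        rwa [List.getElem_append_left hj, List.getElem_append_left hi] at this
      · have := h (u.length + i) (u.length + j) (by omega) (by omega) (by simpa using hb)
        rw [List.getElem_append_right (by omega), List.getElem_append_right (by omega)] at this
        simpa using this

namespace ShuffleAlg

/-- A shuffle product of consecutive blocks of an injective word is the indicator function of the
shuffles of that word. -/
theorem prod_word_ofFn {X : Type*} [DecidableEq X] {N : ℕ} {e : Fin N → X}
    (he : Function.Injective e) {L : List (List X)} (hL : L.flatten = List.ofFn e)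
    (σ : Equiv.Perm (Fin N)) :
    (L.map word).prod (List.ofFn fun t => e (σ.symm t)) =
      if IsShuffle (L.map List.length) σ then 1 else 0 := by
  have hnd : L.flatten.Nodup := hL ▸ List.nodup_ofFn.2 he
  set w := List.ofFn fun t => e (σ.symm t) with hw
  have hwnd : w.Nodup := List.nodup_ofFn.2 (he.comp σ.symm.injective)
  have hmem : ∀ a, a ∈ w ↔ a ∈ L.flatten := fun a => by
    rw [hL, hw, List.mem_ofFn, List.mem_ofFn]
    exact (σ.symm.surjective.exists (p := fun i => e i = a)).symm
  rw [prod_word_apply L hnd w fun a => (hmem a).1]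
  refine if_congr ?_ rfl rfl
  let R : X → X → Prop := fun a b => ∃ i j, e i = a ∧ e j = b ∧ σ i < σ j
  have hR : ∀ i j, R (e i) (e j) ↔ σ i < σ j := fun i j =>
    ⟨fun ⟨i', j', hi, hj, h⟩ => he hi ▸ he hj ▸ h, fun h => ⟨i, j, rfl, rfl, h⟩⟩
  have hwR : w.Pairwise R := by
    rw [hw, List.pairwise_ofFn]
    intro i j hij
    simpa [hR] using hij
  have hsub : ∀ u ∈ L, (w.filter (· ∈ u) = u ↔ u.Pairwise R) := fun u hu => by
    refine ⟨fun h => h ▸ hwR.sublist List.filter_sublist, fun h => ?_⟩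
    have hperm : (w.filter (· ∈ u)).Perm u := by
      rw [List.perm_ext_iff_of_nodup (hwnd.filter _) ((List.nodup_flatten.1 hnd).1 u hu)]
      intro a
      simp only [List.mem_filter, decide_eq_true_eq, hmem, and_iff_right_iff_imp]
      exact fun ha => List.mem_flatten.2 ⟨u, hu, ha⟩
    refine List.Perm.eq_of_pairwise (le := R) ?_ (hwR.sublist List.filter_sublist) h hperm
    rintro a b _ _ ⟨i, j, rfl, rfl, hij⟩ h
    exact absurd hij ((hR _ _).1 h).asymm
  rw [forall₂_congr hsub, forall_pairwise_iff_blockOf]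
  have hlen : L.flatten.length = N := by rw [hL, List.length_ofFn]
  constructor
  · intro h i j hij hb
    have := h i j (hlen ▸ j.2) hij hb
    simpa [hL, hR] using this
  · intro h i j hj hij hb
    have := h ⟨i, hij.trans (hlen ▸ hj)⟩ ⟨j, hlen ▸ hj⟩ hij hb
    simpa [hL, hR] using this

end ShuffleAlg

/-- The permutation sending `i` to `x` and inducing `τ` on the complements. -/
def insertPerm {n : ℕ} (i x : Fin (n + 1)) (τ : Equiv.Perm (Fin n)) :
    Equiv.Perm (Fin (n + 1)) :=
  x.cycleRange⁻¹ * Equiv.Perm.decomposeFin.symm (0, τ) * i.cycleRange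

theorem insertPerm_self {n : ℕ} (i x : Fin (n + 1)) (τ : Equiv.Perm (Fin n)) :
    insertPerm i x τ i = x := by
  simp [insertPerm, Equiv.Perm.mul_apply]

theorem insertPerm_succAbove {n : ℕ} (i x : Fin (n + 1)) (τ : Equiv.Perm (Fin n)) (t : Fin n) :
    insertPerm i x τ (i.succAbove t) = x.succAbove (τ t) := by
  simp [insertPerm, Equiv.Perm.mul_apply]

theorem insertPerm_eq_insertNth {n : ℕ} (i x : Fin (n + 1)) (τ : Equiv.Perm (Fin n)) :
    ⇑(insertPerm i x τ) = i.insertNth x fun t => x.succAbove (τ t) := by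
  rw [Fin.eq_insertNth_iff]
  exact ⟨insertPerm_self i x τ, funext fun t => insertPerm_succAbove i x τ t⟩

theorem sign_insertPerm {n : ℕ} (i x : Fin (n + 1)) (τ : Equiv.Perm (Fin n)) :
    Equiv.Perm.sign (insertPerm i x τ) =
      (-1) ^ (x : ℕ) * (-1) ^ (i : ℕ) * Equiv.Perm.sign τ := by
  simp [insertPerm, Equiv.Perm.decomposeFin.symm_sign, mul_right_comm]

theorem insertPerm_bijective {n : ℕ} (i : Fin (n + 1)) :
    Function.Bijective fun p : Fin (n + 1) × Equiv.Perm (Fin n) => insertPerm i p.1 p.2 := by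
  rw [Fintype.bijective_iff_injective_and_card]
  constructor
  · rintro ⟨x, τ⟩ ⟨y, ρ⟩ h
    have hxy : x = y := by
      simpa [insertPerm_self] using congrArg (fun π : Equiv.Perm (Fin (n + 1)) => π i) h
    subst hxy
    refine Prod.ext rfl (Equiv.ext fun t => ?_)
    have := congrArg (fun π : Equiv.Perm (Fin (n + 1)) => π (i.succAbove t)) h
    simpa [insertPerm_succAbove] using this
  · simp [Fintype.card_perm, Nat.factorial_succ]

namespace ShuffleAlg

variable {A : Type*} [CommRing A]

/-- The signed evaluation of `φ` at the arguments `a` without `a x`, weighted by a function on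
words in the indices. -/
def pairing {n : ℕ} (φ : (Fin n → A) → A) (a : Fin (n + 1) → A) (x : Fin (n + 1)) :
    ShuffleAlg (Fin (n + 1)) →+ A :=
  AddMonoidHom.mk' (fun f => ∑ τ : Equiv.Perm (Fin n),
    (f (List.ofFn fun t => x.succAbove (τ t)) * (Equiv.Perm.sign τ : ℤ)) •
      φ fun t => a (x.succAbove (τ t))) fun f g => by
    simp only [add_apply, add_mul, add_smul, Finset.sum_add_distrib]

theorem pairing_apply {n : ℕ} (φ : (Fin n → A) → A) (a : Fin (n + 1) → A) (x : Fin (n + 1))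
    (f : ShuffleAlg (Fin (n + 1))) :
    pairing φ a x f = ∑ τ : Equiv.Perm (Fin n),
      (f (List.ofFn fun t => x.succAbove (τ t)) * (Equiv.Perm.sign τ : ℤ)) •
        φ fun t => a (x.succAbove (τ t)) := rfl

theorem pairing_prod_word {n r : ℕ} {φ : (Fin n → A) → A}
    (hφ : VanishesOnShuffleProducts r n φ) (a : Fin (n + 1) → A) (x : Fin (n + 1))
    (L : List (List (Fin (n + 1)))) (hr : L.length = r) (hL : ∀ u ∈ L, u ≠ []) :
    pairing φ a x (L.map word).prod = 0 := by
  rw [pairing_apply]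
  by_cases hτ : ∃ τ : Equiv.Perm (Fin n),
      (L.map word).prod (List.ofFn fun t => x.succAbove (τ t)) ≠ 0
  swap
  · push Not at hτ
    exact Finset.sum_eq_zero fun τ _ => by rw [hτ, zero_mul, zero_smul]
  obtain ⟨τ, hτ⟩ := hτ
  have hperm := perm_flatten_of_prod_ne_zero L hτ
  have hlen : L.flatten.length = n := by rw [← hperm.length_eq, List.length_ofFn]
  have hinj : Function.Injective fun t => x.succAbove (τ t) :=
    Fin.succAbove_right_injective.comp τ.injective
  have hnd : L.flatten.Nodup := hperm.nodup_iff.1 (List.nodup_ofFn.2 hinj)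
  obtain ⟨ρ, hρ⟩ : ∃ ρ : Equiv.Perm (Fin n),
      L.flatten = List.ofFn fun t => x.succAbove (ρ t) := by
    have hex : ∀ t : Fin n, ∃ s, x.succAbove s = L.flatten[t]'(hlen.symm ▸ t.2) := fun t => by
      rw [Fin.exists_succAbove_eq_iff]
      intro h
      have hx : x ∈ L.flatten := h ▸ List.getElem_mem _
      obtain ⟨s, hs⟩ := List.mem_ofFn.1 (hperm.mem_iff.2 hx)
      exact Fin.succAbove_ne x _ hs
    choose ρ hρ using hex
    have hρi : Function.Injective ρ := fun s t hst => by
      have := (hρ s).symm.trans ((congrArg x.succAbove hst).trans (hρ t))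
      exact Fin.ext ((hnd.getElem_inj_iff).1 this)
    refine ⟨Equiv.ofBijective ρ (Finite.injective_iff_bijective.1 hρi), ?_⟩
    refine List.ext_getElem (by simp [hlen]) fun i h1 h2 => ?_
    simp [hρ]
  have hinj : Function.Injective fun t => x.succAbove (ρ t) :=
    Fin.succAbove_right_injective.comp ρ.injective
  have key := hφ (L.map List.length) (by simpa using hr)
    (by simpa [List.length_pos_iff] using hL)
    (by rw [← List.length_flatten, hlen]) fun t => a (x.succAbove (ρ t))
  rw [Finset.sum_filter] at key
  rw [← Equiv.sum_comp ((Equiv.inv (Equiv.Perm (Fin n))).trans (Equiv.mulLeft ρ))]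
  have hterm : ∀ σ : Equiv.Perm (Fin n),
      ((L.map word).prod (List.ofFn fun t => x.succAbove ((ρ * σ⁻¹) t)) *
        (Equiv.Perm.sign (ρ * σ⁻¹) : ℤ)) • φ (fun t => a (x.succAbove ((ρ * σ⁻¹) t))) =
      (Equiv.Perm.sign ρ : ℤ) • if IsShuffle (L.map List.length) σ then
        (Equiv.Perm.sign σ : ℤ) • φ fun t => a (x.succAbove (ρ (σ.symm t))) else 0 := fun σ => by
    have := prod_word_ofFn hinj hρ σ
    simp only [Equiv.Perm.mul_apply, Equiv.Perm.inv_def] at this ⊢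
    rw [this]
    split_ifs
    · simp [mul_assoc]
    · simp
  refine (Finset.sum_congr rfl fun σ _ => hterm σ).trans ?_
  rw [← Finset.smul_sum, key, smul_zero]

open scoped Pointwise in
theorem pairing_shFil {n r : ℕ} (hr : 1 ≤ r) {φ : (Fin n → A) → A}
    (hφ : VanishesOnShuffleProducts r n φ) (a : Fin (n + 1) → A) (x : Fin (n + 1))
    {f : ShuffleAlg (Fin (n + 1))} (hf : f ∈ shFil (Fin (n + 1)) r) : pairing φ a x f = 0 := by
  obtain ⟨r, rfl⟩ : ∃ s, r = s + 1 := ⟨r - 1, by omega⟩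
  rw [shFil_succ, augSpan, Submodule.span_pow] at hf
  have : Submodule.span ℤ ((Set.image word {u : List (Fin (n + 1)) | u ≠ []}) ^ (r + 1)) ≤
      LinearMap.ker (pairing φ a x).toIntLinearMap := by
    rw [Submodule.span_le]
    intro g hg
    obtain ⟨F, rfl⟩ := Set.mem_pow.1 hg
    choose u hu hF using fun i => (F i).2
    have := pairing_prod_word hφ a x (List.ofFn u) (by simp) fun v hv => by
      obtain ⟨i, rfl⟩ := List.mem_ofFn.1 hv
      exact hu i
    rw [List.map_ofFn] at this
    simpa [Function.comp_def, hF] using this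
  exact this hf

theorem prod_word_mem_shFil {X : Type*} [DecidableEq X] (L : List (List X))
    (hL : ∀ u ∈ L, u ≠ []) : (L.map word).prod ∈ shFil X L.length := by
  induction L with
  | nil => rw [List.length_nil, shFil_zero, List.map_nil, List.prod_nil, ← word_nil]
           exact word_mem []
  | cons u L ih =>
    rw [List.forall_mem_cons] at hL
    rw [List.map_cons, List.prod_cons, List.length_cons, Nat.add_comm]
    refine mul_mem_shFil ?_ (ih hL.2)
    rw [shFil_one]
    exact Submodule.subset_span ⟨u, hL.1, rfl⟩

/-- Signed sums of `kMap` are paired with deletions of letters. -/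
theorem sum_sign_smul_kMap (k : Type*) [Field k] [Algebra k A] {n : ℕ} (φ : (Fin n → A) → A)
    (a : Fin (n + 1) → A) (f : ShuffleAlg (Fin (n + 1))) :
    ∑ π : Equiv.Perm (Fin (n + 1)),
        (f (List.ofFn π) * (Equiv.Perm.sign π : ℤ)) • kMap k φ (fun t => a (π t)) =
      ((n : k) + 1)⁻¹ • ∑ x : Fin (n + 1),
        (-1 : ℤ) ^ (x : ℕ) • (a x * pairing φ a x (delete x f)) := by
  have hterm : ∀ i x : Fin (n + 1), ∀ τ : Equiv.Perm (Fin n),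
      (f (List.ofFn (insertPerm i x τ)) * (Equiv.Perm.sign (insertPerm i x τ) : ℤ)) •
        ((-1 : ℤ) ^ (i : ℕ) • (a (insertPerm i x τ i) *
          φ fun t => a (insertPerm i x τ (i.succAbove t)))) =
      (-1 : ℤ) ^ (x : ℕ) • (a x *
        (f (List.ofFn (i.insertNth x fun t => x.succAbove (τ t))) * (Equiv.Perm.sign τ : ℤ)) •
          φ fun t => a (x.succAbove (τ t))) := fun i x τ => by
    simp only [insertPerm_self, insertPerm_succAbove, sign_insertPerm, insertPerm_eq_insertNth,
      mul_smul_comm, smul_smul]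
    congr 1
    have : ((-1 : ℤ) ^ (i : ℕ)) * (-1) ^ (i : ℕ) = 1 := by rw [← mul_pow]; simp
    push_cast
    linear_combination (f (List.ofFn (i.insertNth x fun t => x.succAbove (τ t))) *
      (-1) ^ (x : ℕ) * (Equiv.Perm.sign τ : ℤ)) * this
  simp only [kMap, smul_comm _ (((n : k) + 1)⁻¹), ← Finset.smul_sum]
  congr 1
  simp only [Finset.smul_sum]
  rw [Finset.sum_comm]
  have hreindex : ∀ i : Fin (n + 1), ∑ π : Equiv.Perm (Fin (n + 1)),
      (f (List.ofFn π) * (Equiv.Perm.sign π : ℤ)) •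
        ((-1 : ℤ) ^ (i : ℕ) • (a (π i) * φ fun t => a (π (i.succAbove t)))) =
      ∑ x : Fin (n + 1), ∑ τ : Equiv.Perm (Fin n), (-1 : ℤ) ^ (x : ℕ) • (a x *
        (f (List.ofFn (i.insertNth x fun t => x.succAbove (τ t))) * (Equiv.Perm.sign τ : ℤ)) •
          φ fun t => a (x.succAbove (τ t))) := fun i => by
    rw [← (insertPerm_bijective i).sum_comp, Fintype.sum_prod_type]
    exact Finset.sum_congr rfl fun x _ => Finset.sum_congr rfl fun τ _ => hterm i x τ
  rw [Finset.sum_congr rfl fun i _ => hreindex i, Finset.sum_comm]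
  refine Finset.sum_congr rfl fun x _ => ?_
  rw [Finset.sum_comm, pairing_apply, Finset.mul_sum, Finset.smul_sum]
  refine Finset.sum_congr rfl fun τ _ => ?_
  rw [delete_ofFn, Finset.sum_mul, Finset.sum_smul, Finset.mul_sum, Finset.smul_sum]

end ShuffleAlg

/-- over a field `k` of characteristic zero, for a unital commutative
`k`-algebra `A`, `n ≥ 1`, `r ≥ 1`, and a `k`-multilinear map `φ : A^n → A` vanishing on
`r`-fold shuffle products, the map `kφ : A^{n+1} → A` vanishes on `(r+1)`-fold shuffle
products. -/
theorem kMap_vanishesOnShuffleProducts {k A : Type*} [Field k] [CharZero k]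
    [CommRing A] [Algebra k A]
    (n r : ℕ) (hn : 1 ≤ n) (hr : 1 ≤ r)
    (φ : MultilinearMap k (fun _ : Fin n => A) A)
    (hφ : VanishesOnShuffleProducts r n (⇑φ)) :
    VanishesOnShuffleProducts (r+1) (n+1) (kMap k (⇑φ)) := by
  intro c hc hpos hsum a
  set L := c.splitLengths (List.finRange (n + 1))
  have hlen : (List.finRange (n + 1)).length = c.sum := by rw [List.length_finRange, hsum]
  have hflat : L.flatten = List.ofFn (fun t : Fin (n + 1) => t) :=
    (List.flatten_splitLengths _ _ hlen.le).trans (List.ofFn_id _).symm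
  have hmap : L.map List.length = c := List.map_splitLengths_length _ _ hlen.ge
  have hL : ∀ u ∈ L, u ≠ [] := fun u hu =>
    List.length_pos_iff.1 (hpos _ (hmap ▸ List.mem_map_of_mem hu))
  have hLr : L.length = r + 1 := by rw [← hc, ← hmap, List.length_map]
  have hmem := ShuffleAlg.prod_word_mem_shFil L hL
  rw [hLr] at hmem
  have key := ShuffleAlg.sum_sign_smul_kMap k (⇑φ) a (L.map ShuffleAlg.word).prod
  have hzero (x : Fin (n + 1)) :
      ShuffleAlg.pairing φ a x (ShuffleAlg.delete x (L.map ShuffleAlg.word).prod) = 0 :=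
    ShuffleAlg.pairing_shFil hr hφ a x (ShuffleAlg.delete_mem_shFil x r _ hmem)
  simp only [hzero, mul_zero, smul_zero, Finset.sum_const_zero] at key
  rw [← key, Finset.sum_filter, ← Equiv.sum_comp (Equiv.inv (Equiv.Perm (Fin (n + 1))))]
  refine Finset.sum_congr rfl fun π _ => ?_
  have hword := ShuffleAlg.prod_word_ofFn Function.injective_id hflat π⁻¹
  rw [hmap] at hword
  change (L.map ShuffleAlg.word).prod (List.ofFn π) = _ at hword
  rw [hword]
  split_ifs with h₁ h₂ h₂
  · simp [Equiv.Perm.inv_def]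
  · exact absurd h₁ h₂
  · exact absurd h₂ h₁
  · simp
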